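/- Let T > 0, let A : [0,T] → [0,∞) be continuous, nondecreasing with A(0) = 0, and let dA denote its Lebesgue–Stieltjes measure. Let μ > 0, κ ≥ 0, and let h, ψ, y : [0,T] → ℝ be Borel measurable functions such that |h(s)| ≤ ψ(s) + κ·|y(s)| for every s ∈ [0,T]. Then for every t ∈ [0,T], if h is dA-integrable on (0,t], one has (∫_{(0,t]} h(s) dA(s))² ≤ (2/μ) ∫_{(0,t]} e^{μ A(s)} (ψ(s)² + κ² y(s)²) dA(s). -/

import Mathlib

open MeasureTheory Set Real

lemma aux_map (t : ℝ) (ht : 0 ≤ t) (A : ℝ → ℝ)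
    (hc : ContinuousOn A (Icc 0 t)) (hm : MonotoneOn A (Icc 0 t)) (h0 : A 0 = 0)
    (ν : Measure ℝ)
    (hν : ∀ b : ℝ, 0 ≤ b → b ≤ t → ν (Ioc 0 b) = ENNReal.ofReal (A b)) :
    (ν.restrict (Ioc 0 t)).map A = volume.restrict (Ioc 0 (A t)) := by
  have hae : AEMeasurable A (ν.restrict (Ioc 0 t)) :=
    (hc.mono Ioc_subset_Icc_self).aemeasurable measurableSet_Ioc
  have hfin : IsFiniteMeasure (ν.restrict (Ioc 0 t)) :=
    ⟨by rw [Measure.restrict_apply_univ, hν t ht le_rfl]; exact ENNReal.ofReal_lt_top⟩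
  have hAt : 0 ≤ A t := by
    rw [← h0]; exact hm ⟨le_rfl, ht⟩ ⟨ht, le_rfl⟩ ht
  refine Measure.ext_of_Iic _ _ fun c => ?_
  rw [Measure.map_apply_of_aemeasurable hae measurableSet_Iic,
    Measure.restrict_apply measurableSet_Iic, Measure.restrict_apply' measurableSet_Ioc]
  rcases lt_or_ge c 0 with hc0 | hc0
  · have e1 : A ⁻¹' Iic c ∩ Ioc 0 t = ∅ := by
      ext s
      simp only [mem_inter_iff, mem_preimage, mem_Iic, mem_Ioc, mem_empty_iff_false, iff_false]
      rintro ⟨h1, h2, h3⟩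
      have := hm ⟨le_rfl, ht⟩ ⟨h2.le, h3⟩ h2.le
      linarith
    have e2 : Iic c ∩ Ioc 0 (A t) = ∅ := by
      ext s
      simp only [mem_inter_iff, mem_Iic, mem_Ioc, mem_empty_iff_false, iff_false]
      rintro ⟨h1, h2, h3⟩
      linarith
    rw [e1, e2]; simp
  · have hd0 : 0 ≤ min c (A t) := le_min hc0 hAt
    have hK : IsCompact (Icc 0 t ∩ A ⁻¹' Iic c) :=
      isCompact_Icc.of_isClosed_subset (hc.preimage_isClosed_of_isClosed isClosed_Icc isClosed_Iic)
        inter_subset_left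
    obtain ⟨s, ⟨⟨hs0, hst⟩, hsc⟩, hsmax⟩ := hK.exists_isGreatest
      ⟨0, ⟨le_rfl, ht⟩, by simpa [h0] using hc0⟩
    have hsc' : A s ≤ c := hsc
    obtain ⟨r, hr, hrA⟩ := intermediate_value_Icc ht hc
      (show min c (A t) ∈ Icc (A 0) (A t) from ⟨by rw [h0]; exact hd0, min_le_right _ _⟩)
    have hrs : r ≤ s := hsmax ⟨hr, by
      change A r ≤ c
      rw [hrA]; exact min_le_left _ _⟩
    have hAs : A s = min c (A t) := by
      apply le_antisymm (le_min hsc' (hm ⟨hs0, hst⟩ ⟨ht, le_rfl⟩ hst))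
      rw [← hrA]; exact hm hr ⟨hs0, hst⟩ hrs
    have e1 : A ⁻¹' Iic c ∩ Ioc 0 t = Ioc 0 s := by
      ext x
      simp only [mem_inter_iff, mem_preimage, mem_Iic, mem_Ioc]
      constructor
      · rintro ⟨h1, h2, h3⟩
        exact ⟨h2, hsmax ⟨⟨h2.le, h3⟩, h1⟩⟩
      · rintro ⟨h1, h2⟩
        exact ⟨(hm ⟨h1.le, h2.trans hst⟩ ⟨hs0, hst⟩ h2).trans hsc', h1, h2.trans hst⟩
    have e2 : Iic c ∩ Ioc 0 (A t) = Ioc 0 (min c (A t)) := by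
      ext x
      simp only [mem_inter_iff, mem_Iic, mem_Ioc, le_min_iff]
      tauto
    rw [e1, e2, hν s hs0 hst, hAs, Real.volume_Ioc, sub_zero]

lemma aux_exp (μ : ℝ) (hμ : 0 < μ) :
    ∫⁻ x in Ioi (0:ℝ), ENNReal.ofReal (Real.exp (-μ * x)) = ENNReal.ofReal (1 / μ) := by
  rw [← ofReal_integral_eq_lintegral_ofReal]
  · rw [integral_exp_mul_Ioi (by linarith)]
    simp
  · exact exp_neg_integrableOn_Ioi 0 hμ
  · exact Filter.Eventually.of_forall fun x => (Real.exp_pos _).le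

/-- Remark 2.1 (first bullet, Stieltjes part): pathwise estimate for the Stieltjes
integral of a function with linear growth. -/
theorem stmt0
    (T : ℝ) (hT : 0 < T)
    (A : ℝ → ℝ)
    (hA_cont : ContinuousOn A (Icc 0 T))
    (hA_mono : MonotoneOn A (Icc 0 T))
    (hA0 : A 0 = 0)
    (hA_nonneg : ∀ s ∈ Icc 0 T, 0 ≤ A s)
    (ν : Measure ℝ)
    (hν : ∀ a b : ℝ, 0 ≤ a → a ≤ b → b ≤ T → ν (Ioc a b) = ENNReal.ofReal (A b - A a))
    (μ κ : ℝ) (hμ : 0 < μ) (hκ : 0 ≤ κ)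
    (h ψ y : ℝ → ℝ)
    (hh : Measurable h) (hψ : Measurable ψ) (hy : Measurable y)
    (hbound : ∀ s ∈ Icc 0 T, |h s| ≤ ψ s + κ * |y s|)
    (t : ℝ) (ht : t ∈ Icc 0 T)
    (hint : IntegrableOn h (Ioc 0 t) ν) :
    ENNReal.ofReal ((∫ s in Ioc 0 t, h s ∂ν) ^ 2)
      ≤ ENNReal.ofReal (2 / μ) *
        ∫⁻ s in Ioc 0 t,
          ENNReal.ofReal (Real.exp (μ * A s) * ((ψ s) ^ 2 + κ ^ 2 * (y s) ^ 2)) ∂ν := by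
  have hsub : Icc 0 t ⊆ Icc 0 T := Icc_subset_Icc_right ht.2
  have hae : AEMeasurable A (ν.restrict (Ioc 0 t)) :=
    ((hA_cont.mono hsub).mono Ioc_subset_Icc_self).aemeasurable measurableSet_Ioc
  have hmap := aux_map t ht.1 A (hA_cont.mono hsub) (hA_mono.mono hsub) hA0 ν
    (fun b hb hbt => by rw [hν 0 b le_rfl hb (hbt.trans ht.2), hA0, sub_zero])
  have hE : ∫⁻ s in Ioc 0 t, ENNReal.ofReal (Real.exp (-μ * A s)) ∂ν ≤ ENNReal.ofReal (1 / μ) := by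
    rw [← aux_exp μ hμ,
      ← lintegral_map' (f := fun x => ENNReal.ofReal (Real.exp (-μ * x))) (by fun_prop) hae, hmap]
    exact lintegral_mono_set Ioc_subset_Ioi_self
  set F : ℝ → ENNReal := fun s => ENNReal.ofReal (Real.exp (-μ * A s / 2)) with hF
  set G : ℝ → ENNReal := fun s => ENNReal.ofReal (Real.exp (μ * A s / 2) * |h s|) with hG
  have hFm : AEMeasurable F (ν.restrict (Ioc 0 t)) := by fun_prop
  have hGm : AEMeasurable G (ν.restrict (Ioc 0 t)) := by
    have : Measurable fun s => |h s| := hh.abs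
    fun_prop
  have hCS := ENNReal.lintegral_mul_le_Lp_mul_Lq (ν.restrict (Ioc 0 t))
    (Real.HolderConjugate.two_two) hFm hGm
  have hF2 : ∀ s, F s ^ (2:ℝ) = ENNReal.ofReal (Real.exp (-μ * A s)) := fun s => by
    rw [ENNReal.rpow_two, hF, ← ENNReal.ofReal_pow (Real.exp_pos _).le, ← Real.exp_nat_mul]
    congr 2; push_cast; ring
  have hFG : ∀ s, (F * G) s = ENNReal.ofReal |h s| := fun s => by
    rw [Pi.mul_apply, hF, hG, ← ENNReal.ofReal_mul (Real.exp_pos _).le, ← mul_assoc,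
      ← Real.exp_add]
    congr 1
    rw [show -μ * A s / 2 + μ * A s / 2 = 0 by ring, Real.exp_zero, one_mul]
  have hG2 : ∫⁻ s in Ioc 0 t, G s ^ (2:ℝ) ∂ν ≤ ENNReal.ofReal 2 * ∫⁻ s in Ioc 0 t,
          ENNReal.ofReal (Real.exp (μ * A s) * ((ψ s) ^ 2 + κ ^ 2 * (y s) ^ 2)) ∂ν := by
    rw [← lintegral_const_mul' _ _ ENNReal.ofReal_ne_top]
    refine setLIntegral_mono' measurableSet_Ioc fun s hs => ?_
    rw [ENNReal.rpow_two, hG, ← ENNReal.ofReal_pow (by positivity),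
      ← ENNReal.ofReal_mul (by norm_num)]
    apply ENNReal.ofReal_le_ofReal
    have hb := hbound s (hsub (Ioc_subset_Icc_self hs))
    have e : Real.exp (μ * A s / 2) ^ 2 = Real.exp (μ * A s) := by
      rw [← Real.exp_nat_mul]; congr 1; push_cast; ring
    have h2 : |h s| ^ 2 ≤ 2 * ((ψ s) ^ 2 + κ ^ 2 * (y s) ^ 2) := by
      have := pow_le_pow_left₀ (abs_nonneg _) hb 2
      have e3 := sq_abs (y s)
      nlinarith [sq_nonneg (ψ s - κ * |y s|)]
    rw [mul_pow, e]
    have := mul_le_mul_of_nonneg_left h2 (Real.exp_pos (μ * A s)).le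
    linarith
  simp only [hFG, hF2] at hCS
  have h1 : ENNReal.ofReal |∫ s in Ioc 0 t, h s ∂ν| ≤ ∫⁻ s in Ioc 0 t, ENNReal.ofReal |h s| ∂ν := by
    rw [← ofReal_integral_eq_lintegral_ofReal hint.abs
      (Filter.Eventually.of_forall fun x => abs_nonneg _)]
    exact ENNReal.ofReal_le_ofReal (abs_integral_le_integral_abs)
  rw [← sq_abs, ENNReal.ofReal_pow (abs_nonneg _)]
  have h3 := pow_le_pow_left₀ (zero_le) (h1.trans hCS) 2
  refine h3.trans ?_
  have hs : ∀ x : ENNReal, (x ^ (1 / 2 : ℝ)) ^ 2 = x := fun x => by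
    rw [← ENNReal.rpow_two, ← ENNReal.rpow_mul]; norm_num
  rw [mul_pow, hs, hs]
  refine (mul_le_mul' hE hG2).trans ?_
  rw [← mul_assoc, ← ENNReal.ofReal_mul (by positivity)]
  rw [show 1 / μ * 2 = 2 / μ by ring]
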